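/- Let ρ be a polynomial weight on ℝ^d, 𝔹 a real Banach space, and 0 ≤ α ≤ γ ≤ 2. Then there is a constant C = C(d, α, γ, φ, ρ) > 0 such that for every f : ℝ^d → 𝔹 with ‖f‖_{C^α_ρ} < ∞ and every integer n ≥ 1, the mollification f_n := f * φ_n satisfies ‖f_n‖_{C^γ_ρ} ≤ C·n^{γ−α}·‖f‖_{C^α_ρ}. -/

import Mathlib

open scoped ENNReal

noncomputable section

/-- A polynomial weight: an everywhere positive function comparable to `(1 + ‖x‖) ^ r`
for some real exponent `r`. -/
def IsPolyWeight {E : Type*} [NormedAddCommGroup E] (ρ : E → ℝ) : Prop :=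
  (∀ x, 0 < ρ x) ∧
  ∃ r c C : ℝ, 0 < c ∧ c ≤ C ∧
    ∀ x, c * (1 + ‖x‖) ^ r ≤ ρ x ∧ ρ x ≤ C * (1 + ‖x‖) ^ r

/-- Supremum of `‖g‖` over the unit ball centered at `x`, valued in `ℝ≥0∞`. -/
def ballSup {d : ℕ} {F : Type*} [NormedAddCommGroup F]
    (g : EuclideanSpace ℝ (Fin d) → F) (x : EuclideanSpace ℝ (Fin d)) : ℝ≥0∞ :=
  ⨆ y ∈ Metric.ball x 1, (‖g y‖₊ : ℝ≥0∞)

/-- Hölder seminorm of exponent `σ` of `g` over the unit ball centered at `x`. -/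
def ballHolderSemi {d : ℕ} {F : Type*} [NormedAddCommGroup F]
    (σ : ℝ) (g : EuclideanSpace ℝ (Fin d) → F) (x : EuclideanSpace ℝ (Fin d)) : ℝ≥0∞ :=
  ⨆ y ∈ Metric.ball x 1, ⨆ y' ∈ Metric.ball x 1, ⨆ _ : y ≠ y',
    ENNReal.ofReal (‖g y - g y'‖ / ‖y - y'‖ ^ σ)

/-- The `C^{k+σ}`-norm of `f` on the unit ball centered at `x`: the sum of the sup norms of
the iterated Fréchet derivatives of order `0,…,k` plus (when `σ > 0`) the `σ`-Hölder
seminorm of the `k`-th derivative. -/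
def ballCNorm {d : ℕ} {𝔹 : Type*} [NormedAddCommGroup 𝔹] [NormedSpace ℝ 𝔹]
    (k : ℕ) (σ : ℝ) (f : EuclideanSpace ℝ (Fin d) → 𝔹) (x : EuclideanSpace ℝ (Fin d)) :
    ℝ≥0∞ :=
  (∑ j ∈ Finset.range (k + 1), ballSup (iteratedFDeriv ℝ j f) x)
    + (if 0 < σ then ballHolderSemi σ (iteratedFDeriv ℝ k f) x else 0)

/-- Weighted Hölder norm `‖f‖_{C^{k+σ}_ρ} = sup_x ρ(x)⁻¹ ‖f‖_{C^{k+σ}(B₁(x))}`. -/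
def wNorm {d : ℕ} {𝔹 : Type*} [NormedAddCommGroup 𝔹] [NormedSpace ℝ 𝔹]
    (ρ : EuclideanSpace ℝ (Fin d) → ℝ) (k : ℕ) (σ : ℝ)
    (f : EuclideanSpace ℝ (Fin d) → 𝔹) : ℝ≥0∞ :=
  ⨆ x : EuclideanSpace ℝ (Fin d), (ENNReal.ofReal (ρ x))⁻¹ * ballCNorm k σ f x

/-- Weighted Hölder norm of real order `γ ≥ 0`, splitting `γ = ⌊γ⌋ + (γ - ⌊γ⌋)`. -/
def wNormE {d : ℕ} {𝔹 : Type*} [NormedAddCommGroup 𝔹] [NormedSpace ℝ 𝔹]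
    (ρ : EuclideanSpace ℝ (Fin d) → ℝ) (γ : ℝ)
    (f : EuclideanSpace ℝ (Fin d) → 𝔹) : ℝ≥0∞ :=
  wNorm ρ ⌊γ⌋₊ (γ - ⌊γ⌋₊) f

open MeasureTheory in
/-- Mollification `f_n = f * φ_n` with `φ_n(x) = n^d φ(n x)`. -/
def mollify {d : ℕ} {𝔹 : Type*} [NormedAddCommGroup 𝔹] [NormedSpace ℝ 𝔹]
    [CompleteSpace 𝔹] (φ : EuclideanSpace ℝ (Fin d) → ℝ) (n : ℕ)
    (f : EuclideanSpace ℝ (Fin d) → 𝔹) (x : EuclideanSpace ℝ (Fin d)) : 𝔹 :=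
  ∫ y : EuclideanSpace ℝ (Fin d), ((n : ℝ) ^ d * φ ((n : ℝ) • y)) • f (x - y)

open MeasureTheory Metric Set
open scoped Convolution

universe u

/-!
Write `k = ⌊α⌋`. In a derivative of `f * φ_n`, up to `k` derivatives are put on `f`, where the
`C^α`-norm bounds them, and the remaining `m` on the kernel. For `m ≥ 1` the `m`-th derivative of
the kernel has mean zero, so only the oscillation of `∇^k f` at the scale `1 / n` of its support
contributes: `n ^ m` from differentiating the kernel is improved to `n ^ (m - (α - k))`. The Hölder
seminorm of the top derivative interpolates between a bound on its increments with a smaller power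
of the distance and the Lipschitz bound coming from one more derivative. The weight enters only
through its values on balls of fixed radius being comparable.
-/

section ConvolutionDerivatives

theorem integrable_smul_comp_sub {G F : Type*} [NormedAddCommGroup G] [MeasurableSpace G]
    [BorelSpace G] [NormedAddCommGroup F] [NormedSpace ℝ F] {μ : Measure G}
    [IsFiniteMeasureOnCompacts μ] {ψ : G → ℝ} (hψ : Continuous ψ) (hc : HasCompactSupport ψ)
    {f : G → F} (hf : Continuous f) (x : G) :
    Integrable (fun y ↦ ψ y • f (x - y)) μ :=
  Continuous.integrable_of_hasCompactSupport (by fun_prop) hc.smul_right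

variable {E F : Type*} [NormedAddCommGroup E] [NormedSpace ℝ E]
  [NormedAddCommGroup F] [NormedSpace ℝ F]

theorem norm_iteratedFDeriv_iteratedFDeriv (f : E → F) (k m : ℕ) (x : E) :
    ‖iteratedFDeriv ℝ m (iteratedFDeriv ℝ k f) x‖ = ‖iteratedFDeriv ℝ (k + m) f x‖ := by
  induction k generalizing m with
  | zero =>
    rw [iteratedFDeriv_zero_eq_comp, LinearIsometryEquiv.norm_iteratedFDeriv_comp_left, zero_add]
  | succ k ih =>
    rw [iteratedFDeriv_succ_eq_comp_left,
      LinearIsometryEquiv.norm_iteratedFDeriv_comp_left (𝕜 := ℝ) (F := E →L[ℝ] E [×k]→L[ℝ] F)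
        (G := E [×k + 1]→L[ℝ] F),
      norm_iteratedFDeriv_fderiv, ih, Nat.add_right_comm, add_assoc]

variable [MeasurableSpace E] {μ : Measure E}

theorem integral_continuousMultilinearCurryLeftEquiv_symm {k : ℕ} (g : E → E →L[ℝ] E [×k]→L[ℝ] F) :
    ∫ x, (continuousMultilinearCurryLeftEquiv ℝ (fun _ : Fin (k + 1) ↦ E) F).symm (g x) ∂μ =
      (continuousMultilinearCurryLeftEquiv ℝ (fun _ : Fin (k + 1) ↦ E) F).symm (∫ x, g x ∂μ) :=
  ContinuousLinearEquiv.integral_comp_comm (𝕜 := ℝ) (E := E →L[ℝ] E [×k]→L[ℝ] F)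
    (F := E [×k + 1]→L[ℝ] F)
    (continuousMultilinearCurryLeftEquiv ℝ (fun _ : Fin (k + 1) ↦ E) F).symm g

variable [FiniteDimensional ℝ E] [BorelSpace E]

theorem hasFDerivAt_convolution_of_contDiff_right [IsFiniteMeasureOnCompacts μ] {ψ : E → ℝ}
    (hψ : Continuous ψ) (hc : HasCompactSupport ψ) {f : E → F} (hf : ContDiff ℝ 1 f) (x : E) :
    HasFDerivAt (ψ ⋆[.lsmul ℝ ℝ, μ] f) ((ψ ⋆[.lsmul ℝ ℝ, μ] fderiv ℝ f) x) x := by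
  have hdf : Continuous (fderiv ℝ f) := hf.continuous_fderiv one_ne_zero
  obtain ⟨B, hB⟩ := (((isCompact_closedBall x 1).add hc.isCompact.neg).image hdf.norm).bddAbove
  refine hasFDerivAt_integral_of_dominated_of_fderiv_le (bound := fun y ↦ ‖ψ y‖ * B)
    (F' := fun z y ↦ ψ y • fderiv ℝ f (z - y))
    (ball_mem_nhds x one_pos)
    (.of_forall fun z ↦ (integrable_smul_comp_sub hψ hc hf.continuous z).aestronglyMeasurable)
    (integrable_smul_comp_sub hψ hc hf.continuous x)
    (integrable_smul_comp_sub hψ hc hdf x).aestronglyMeasurable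
    (.of_forall fun y z hz ↦ ?_)
    ((hψ.integrable_of_hasCompactSupport hc).norm.mul_const B) (.of_forall fun y z _ ↦ ?_)
  · by_cases hy : y ∈ tsupport ψ
    · rw [norm_smul]
      gcongr
      exact hB ⟨z - y, ⟨z, ball_subset_closedBall hz, -y, by simpa using hy,
        (sub_eq_add_neg z y).symm⟩, rfl⟩
    · simp [image_eq_zero_of_notMem_tsupport hy]
  · have hdiff := ((hf.differentiable one_ne_zero) (z - y)).hasFDerivAt.comp z
      ((hasFDerivAt_id z).sub_const y)
    exact hdiff.const_smul (ψ y)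

theorem iteratedFDeriv_convolution_right [IsFiniteMeasureOnCompacts μ] {ψ : E → ℝ}
    (hψ : Continuous ψ) (hc : HasCompactSupport ψ) {f : E → F} {k : ℕ} (hf : ContDiff ℝ k f) :
    iteratedFDeriv ℝ k (ψ ⋆[.lsmul ℝ ℝ, μ] f) = ψ ⋆[.lsmul ℝ ℝ, μ] iteratedFDeriv ℝ k f := by
  induction k with
  | zero =>
    funext x
    simp only [iteratedFDeriv_zero_eq_comp, convolution_lsmul, Function.comp_apply, ← map_smul]
    exact ((continuousMultilinearCurryFin0 ℝ E F).symm.toContinuousLinearEquiv.integral_comp_comm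
      _).symm
  | succ k ih =>
    have hk : ContDiff ℝ 1 (iteratedFDeriv ℝ k f) := hf.iteratedFDeriv_right (by norm_cast; omega)
    funext x
    rw [iteratedFDeriv_succ_eq_comp_left, ih (hf.of_le (by norm_cast; omega)), Function.comp_apply,
      (hasFDerivAt_convolution_of_contDiff_right hψ hc hk x).fderiv]
    exact (integral_continuousMultilinearCurryLeftEquiv_symm _).symm

variable [μ.IsAddHaarMeasure]

theorem iteratedFDeriv_convolution_left {ψ : E → ℝ} {m : ℕ} (hψ : ContDiff ℝ m ψ)
    (hc : HasCompactSupport ψ) {f : E → F} (hf : LocallyIntegrable f μ) :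
    iteratedFDeriv ℝ m (ψ ⋆[.lsmul ℝ ℝ, μ] f) =
      iteratedFDeriv ℝ m ψ ⋆[ContinuousMultilinearMap.smulRightL ℝ (fun _ ↦ E) F, μ] f := by
  induction m with
  | zero =>
    funext x
    exact ((continuousMultilinearCurryFin0 ℝ E F).symm.toContinuousLinearEquiv.integral_comp_comm
      _).symm
  | succ m ih =>
    have hm : ContDiff ℝ 1 (iteratedFDeriv ℝ m ψ) :=
      hψ.iteratedFDeriv_right (by norm_cast; omega)
    funext x
    rw [iteratedFDeriv_succ_eq_comp_left, ih (hψ.of_le (by norm_cast; omega)), Function.comp_apply,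
      ((hc.iteratedFDeriv m).hasFDerivAt_convolution_left _ hm hf x).fderiv]
    exact (integral_continuousMultilinearCurryLeftEquiv_symm _).symm

theorem dist_iteratedFDeriv_convolution_le {ψ : E → ℝ} {m : ℕ} (hψ : ContDiff ℝ m ψ)
    (hc : HasCompactSupport ψ) {r : ℝ} (hr : tsupport ψ ⊆ ball 0 r) {g : E → F}
    (hg : Continuous g) {x : E} {c : F} {T : ℝ} (hT : 0 ≤ T)
    (hgT : ∀ z ∈ ball x r, dist (g z) c ≤ T) :
    dist (iteratedFDeriv ℝ m (ψ ⋆[.lsmul ℝ ℝ, μ] g) x)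
        (∫ y, (iteratedFDeriv ℝ m ψ y).smulRight c ∂μ) ≤
      (∫ y, ‖iteratedFDeriv ℝ m ψ y‖ ∂μ) * T := by
  have hint : Integrable (iteratedFDeriv ℝ m ψ) μ :=
    (hψ.continuous_iteratedFDeriv le_rfl).integrable_of_hasCompactSupport (hc.iteratedFDeriv m)
  rw [iteratedFDeriv_convolution_left hψ hc hg.locallyIntegrable]
  refine (dist_convolution_le' _ hT hint ((support_iteratedFDeriv_subset m).trans hr)
    hg.aestronglyMeasurable hgT).trans ?_
  gcongr
  exact mul_le_of_le_one_left (by positivity) ContinuousMultilinearMap.norm_smulRightL_le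

theorem norm_iteratedFDeriv_convolution_le {ψ : E → ℝ} {m : ℕ} (hψ : ContDiff ℝ m ψ)
    (hc : HasCompactSupport ψ) {r : ℝ} (hr : tsupport ψ ⊆ ball 0 r) {g : E → F}
    (hg : Continuous g) {x : E} {T : ℝ} (hT : 0 ≤ T) (hgT : ∀ z ∈ ball x r, ‖g z‖ ≤ T) :
    ‖iteratedFDeriv ℝ m (ψ ⋆[.lsmul ℝ ℝ, μ] g) x‖ ≤ (∫ y, ‖iteratedFDeriv ℝ m ψ y‖ ∂μ) * T := by
  have hzero (y : E) : (iteratedFDeriv ℝ m ψ y).smulRight (0 : F) = 0 := by ext; simp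
  simpa [hzero] using dist_iteratedFDeriv_convolution_le (μ := μ) (c := 0) hψ hc hr hg hT
    (by simpa using hgT)

theorem integral_iteratedFDeriv_smulRight {ψ : E → ℝ} {m : ℕ} (hm : m ≠ 0)
    (hψ : ContDiff ℝ m ψ) (hc : HasCompactSupport ψ) (c : F) :
    ∫ y, (iteratedFDeriv ℝ m ψ y).smulRight c ∂μ = 0 := by
  have hconst : iteratedFDeriv ℝ m (ψ ⋆[.lsmul ℝ ℝ, μ] fun _ ↦ c) = 0 :=
    iteratedFDeriv_const_of_ne hm (∫ y, ψ y • c ∂μ)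
  rw [iteratedFDeriv_convolution_left hψ hc continuous_const.locallyIntegrable] at hconst
  exact congrFun hconst 0

theorem norm_iteratedFDeriv_convolution_le_of_dist_le {ψ : E → ℝ} {m : ℕ} (hm : m ≠ 0)
    (hψ : ContDiff ℝ m ψ) (hc : HasCompactSupport ψ) {r : ℝ} (hr : tsupport ψ ⊆ ball 0 r)
    {g : E → F} (hg : Continuous g) {x : E} {T : ℝ} (hT : 0 ≤ T)
    (hgT : ∀ z ∈ ball x r, dist (g z) (g x) ≤ T) :
    ‖iteratedFDeriv ℝ m (ψ ⋆[.lsmul ℝ ℝ, μ] g) x‖ ≤ (∫ y, ‖iteratedFDeriv ℝ m ψ y‖ ∂μ) * T := by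
  simpa [integral_iteratedFDeriv_smulRight hm hψ hc] using
    dist_iteratedFDeriv_convolution_le (μ := μ) hψ hc hr hg hT hgT

theorem norm_iteratedFDeriv_add_convolution {ψ : E → ℝ} (hψ : Continuous ψ)
    (hc : HasCompactSupport ψ) {f : E → F} {k : ℕ} (hf : ContDiff ℝ k f) (m : ℕ) (x : E) :
    ‖iteratedFDeriv ℝ (k + m) (ψ ⋆[.lsmul ℝ ℝ, μ] f) x‖ =
      ‖iteratedFDeriv ℝ m (ψ ⋆[.lsmul ℝ ℝ, μ] iteratedFDeriv ℝ k f) x‖ := by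
  rw [← iteratedFDeriv_convolution_right hψ hc hf, norm_iteratedFDeriv_iteratedFDeriv]

theorem dist_convolution_le_of_dist_translate_le {ψ : E → ℝ} (hψ : Continuous ψ)
    (hc : HasCompactSupport ψ) {r : ℝ} (hr : tsupport ψ ⊆ ball 0 r) {g : E → F}
    (hg : Continuous g) {x v : E} {T : ℝ} (hT : 0 ≤ T)
    (hgT : ∀ z ∈ ball x r, dist (g (z + v)) (g z) ≤ T) :
    dist ((ψ ⋆[.lsmul ℝ ℝ, μ] g) (x + v)) ((ψ ⋆[.lsmul ℝ ℝ, μ] g) x) ≤ (∫ y, ‖ψ y‖ ∂μ) * T := by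
  have hsub : (ψ ⋆[.lsmul ℝ ℝ, μ] g) (x + v) - (ψ ⋆[.lsmul ℝ ℝ, μ] g) x =
      (ψ ⋆[.lsmul ℝ ℝ, μ] fun z ↦ g (z + v) - g z) x := by
    simp only [convolution_lsmul, smul_sub, sub_add_eq_add_sub]
    exact (integral_sub (integrable_smul_comp_sub hψ hc hg _)
      (integrable_smul_comp_sub hψ hc hg _)).symm
  have hbound := norm_iteratedFDeriv_convolution_le (μ := μ) (m := 0) (x := x)
    (contDiff_zero.2 hψ) hc hr (g := fun z ↦ g (z + v) - g z) (by fun_prop) hT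
    (by simpa only [dist_eq_norm] using hgT)
  simpa only [dist_eq_norm, hsub, norm_iteratedFDeriv_zero] using hbound

end ConvolutionDerivatives

section Dilation

variable {E F : Type*} [NormedAddCommGroup E] [NormedSpace ℝ E]
  [NormedAddCommGroup F] [NormedSpace ℝ F] {φ : E → ℝ} {t : ℝ}

/-- The rescaled kernel `φ_t y = t ^ dim E * φ (t y)`, with the same integral as `φ` and
concentrated at scale `1 / t`. -/
def dilate (t : ℝ) (φ : E → ℝ) (y : E) : ℝ := t ^ Module.finrank ℝ E * φ (t • y)

theorem contDiff_dilate {m : ℕ} (hφ : ContDiff ℝ m φ) (t : ℝ) : ContDiff ℝ m (dilate t φ) := by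
  unfold dilate
  fun_prop

theorem hasCompactSupport_dilate (hc : HasCompactSupport φ) (ht : t ≠ 0) :
    HasCompactSupport (dilate t φ) :=
  (hc.comp_smul ht).mul_left

theorem tsupport_dilate_subset_ball {R : ℝ} (hR : tsupport φ ⊆ ball 0 R) (ht : 0 < t) :
    tsupport (dilate t φ) ⊆ ball 0 (R / t) := by
  intro y hy
  have hty : t • y ∈ ball 0 R :=
    hR (tsupport_comp_subset_preimage φ (continuous_const_smul t) (tsupport_mul_subset_right hy))
  rw [mem_ball_zero_iff] at hty ⊢
  rwa [norm_smul, Real.norm_of_nonneg ht.le, mul_comm, ← lt_div_iff₀ ht] at hty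

theorem iteratedFDeriv_dilate {m : ℕ} (hφ : ContDiff ℝ m φ) (t : ℝ) (y : E) :
    iteratedFDeriv ℝ m (dilate t φ) y =
      (t ^ Module.finrank ℝ E * t ^ m) • iteratedFDeriv ℝ m φ (t • y) := by
  have hφt : ContDiff ℝ m fun y ↦ φ (t • y) := by fun_prop
  rw [mul_smul, ← congrFun (iteratedFDeriv_comp_const_smul t hφ) y]
  exact iteratedFDeriv_const_smul_apply (a := t ^ Module.finrank ℝ E) hφt.contDiffAt

theorem integral_norm_iteratedFDeriv_dilate [FiniteDimensional ℝ E] [MeasurableSpace E]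
    [BorelSpace E] {μ : Measure E} [μ.IsAddHaarMeasure] {m : ℕ} (hφ : ContDiff ℝ m φ)
    (ht : 0 < t) :
    ∫ y, ‖iteratedFDeriv ℝ m (dilate t φ) y‖ ∂μ = t ^ m * ∫ y, ‖iteratedFDeriv ℝ m φ y‖ ∂μ := by
  simp only [iteratedFDeriv_dilate hφ, norm_smul, norm_mul, norm_pow, Real.norm_of_nonneg ht.le,
    integral_const_mul]
  rw [Measure.integral_comp_smul_of_nonneg μ (fun y ↦ ‖iteratedFDeriv ℝ m φ y‖) t (hR := ht.le),
    smul_eq_mul]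
  field_simp

end Dilation

section LocalEstimates

variable {E F : Type*} [NormedAddCommGroup E] [NormedSpace ℝ E]
  [NormedAddCommGroup F] [NormedSpace ℝ F] {f : E → F} {s : Set E} {k : ℕ} {σ T : ℝ}

/-- `HolderBoundOn k σ T f s` says that `T` bounds the derivatives of `f` of order at most `k` on
`s` and the `σ`-Hölder constant of the `k`-th one; up to a factor, that the `C^{k+σ}(s)`-norm of
`f` is at most `T`. -/
structure HolderBoundOn (k : ℕ) (σ T : ℝ) (f : E → F) (s : Set E) : Prop where
  norm_le : ∀ j ≤ k, ∀ y ∈ s, ‖iteratedFDeriv ℝ j f y‖ ≤ T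
  dist_le : ∀ y ∈ s, ∀ z ∈ s,
    dist (iteratedFDeriv ℝ k f y) (iteratedFDeriv ℝ k f z) ≤ T * dist y z ^ σ

theorem HolderBoundOn.nonneg (h : HolderBoundOn k σ T f s) (hs : s.Nonempty) : 0 ≤ T :=
  let ⟨y, hy⟩ := hs
  (norm_nonneg _).trans (h.norm_le 0 k.zero_le y hy)

theorem le_mul_rpow_of_le_mul_rpow_of_le_mul {Z P u β σ : ℝ} (hP : 0 ≤ P)
    (hu : 0 ≤ u) (hβσ : β ≤ σ) (hσ : σ ≤ 1) (h₁ : Z ≤ P * u ^ β) (h₂ : Z ≤ P * u) :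
    Z ≤ P * u ^ σ := by
  rcases le_total 1 u with h | h
  · exact h₁.trans (by gcongr)
  · exact h₂.trans (by gcongr; exact Real.self_le_rpow_of_le_one hu h hσ)

variable [FiniteDimensional ℝ E] [MeasurableSpace E] [BorelSpace E] {μ : Measure E}
  [μ.IsAddHaarMeasure] {φ : E → ℝ} {R t : ℝ}

theorem HolderBoundOn.norm_iteratedFDeriv_convolution_le (h : HolderBoundOn k σ T f s)
    (hf : ContDiff ℝ k f) {ψ : E → ℝ} (hψ : Continuous ψ) (hc : HasCompactSupport ψ) {r : ℝ}
    (hr : tsupport ψ ⊆ ball 0 r) (hr0 : 0 < r) {y : E} (hy : ball y r ⊆ s) {j : ℕ} (hj : j ≤ k) :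
    ‖iteratedFDeriv ℝ j (ψ ⋆[.lsmul ℝ ℝ, μ] f) y‖ ≤ (∫ z, ‖ψ z‖ ∂μ) * T := by
  have hfj : ContDiff ℝ j f := hf.of_le (by exact_mod_cast hj)
  rw [iteratedFDeriv_convolution_right hψ hc hfj]
  simpa only [norm_iteratedFDeriv_zero] using
    _root_.norm_iteratedFDeriv_convolution_le (μ := μ) (m := 0) (contDiff_zero.2 hψ) hc hr
      (hfj.continuous_iteratedFDeriv le_rfl) (h.nonneg ⟨y, hy (mem_ball_self hr0)⟩)
      fun z hz ↦ h.norm_le j hj z (hy hz)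

theorem HolderBoundOn.norm_iteratedFDeriv_add_convolution_le (h : HolderBoundOn k σ T f s)
    (hσ : 0 ≤ σ) (hf : ContDiff ℝ k f) {m : ℕ} (hm : m ≠ 0) {ψ : E → ℝ} (hψ : ContDiff ℝ m ψ)
    (hc : HasCompactSupport ψ) {r : ℝ} (hr : tsupport ψ ⊆ ball 0 r) (hr0 : 0 < r) {y : E}
    (hy : ball y r ⊆ s) :
    ‖iteratedFDeriv ℝ (k + m) (ψ ⋆[.lsmul ℝ ℝ, μ] f) y‖ ≤
      (∫ z, ‖iteratedFDeriv ℝ m ψ z‖ ∂μ) * (T * r ^ σ) := by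
  have hys : y ∈ s := hy (mem_ball_self hr0)
  have hT : 0 ≤ T := h.nonneg ⟨y, hys⟩
  rw [norm_iteratedFDeriv_add_convolution hψ.continuous hc hf]
  refine norm_iteratedFDeriv_convolution_le_of_dist_le hm hψ hc hr
    (hf.continuous_iteratedFDeriv le_rfl) (by positivity) fun z hz ↦ ?_
  refine (h.dist_le z (hy hz) y hys).trans ?_
  gcongr
  exact (mem_ball.1 hz).le

theorem HolderBoundOn.dist_iteratedFDeriv_convolution_le (h : HolderBoundOn k σ T f s)
    (hf : ContDiff ℝ k f) {ψ : E → ℝ} (hψ : Continuous ψ) (hc : HasCompactSupport ψ) {r : ℝ}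
    (hr : tsupport ψ ⊆ ball 0 r) (hr0 : 0 < r) {y z : E} (hy : ball y r ⊆ s)
    (hz : ball z r ⊆ s) :
    dist (iteratedFDeriv ℝ k (ψ ⋆[.lsmul ℝ ℝ, μ] f) y)
        (iteratedFDeriv ℝ k (ψ ⋆[.lsmul ℝ ℝ, μ] f) z) ≤
      (∫ w, ‖ψ w‖ ∂μ) * (T * dist y z ^ σ) := by
  have hT : 0 ≤ T := h.nonneg ⟨y, hy (mem_ball_self hr0)⟩
  rw [iteratedFDeriv_convolution_right hψ hc hf]
  have hbound := dist_convolution_le_of_dist_translate_le (μ := μ) (x := z) (v := y - z) hψ hc hr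
    (hf.continuous_iteratedFDeriv le_rfl) (T := T * dist y z ^ σ) (by positivity) fun w hw ↦ ?_
  · simpa only [add_sub_cancel] using hbound
  · have hwy : w + (y - z) ∈ ball y r := by
      rw [mem_ball_iff_norm] at hw ⊢
      convert hw using 2
      abel
    simpa [dist_eq_norm] using h.dist_le _ (hy hwy) _ (hz hw)

theorem HolderBoundOn.norm_iteratedFDeriv_add_dilate_convolution_le
    (h : HolderBoundOn k σ T f s) (hσ : 0 ≤ σ) (hf : ContDiff ℝ k f) {m : ℕ} (hm : m ≠ 0)
    (hφ : ContDiff ℝ m φ) (hc : HasCompactSupport φ) (hR : tsupport φ ⊆ ball 0 R) (hR0 : 0 < R)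
    (ht : 0 < t) {y : E} (hy : ball y (R / t) ⊆ s) :
    ‖iteratedFDeriv ℝ (k + m) (dilate t φ ⋆[.lsmul ℝ ℝ, μ] f) y‖ ≤
      (∫ z, ‖iteratedFDeriv ℝ m φ z‖ ∂μ) * R ^ σ * T * t ^ (m - σ) := by
  refine (h.norm_iteratedFDeriv_add_convolution_le hσ hf hm (contDiff_dilate hφ t)
    (hasCompactSupport_dilate hc ht.ne') (tsupport_dilate_subset_ball hR ht) (by positivity)
    hy).trans_eq ?_
  rw [integral_norm_iteratedFDeriv_dilate hφ ht, Real.div_rpow hR0.le ht.le, Real.rpow_sub ht,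
    Real.rpow_natCast]
  ring

theorem integral_norm_dilate (hφ : Continuous φ) (ht : 0 < t) :
    ∫ y, ‖dilate t φ y‖ ∂μ = ∫ y, ‖φ y‖ ∂μ := by
  simpa using integral_norm_iteratedFDeriv_dilate (μ := μ) (contDiff_zero.2 hφ) ht

theorem HolderBoundOn.dist_iteratedFDeriv_add_dilate_convolution_le_mul_dist {m : ℕ} {u : Set E}
    (h : HolderBoundOn k σ T f s) (hσ : 0 ≤ σ) (hf : ContDiff ℝ k f)
    (hφ : ContDiff ℝ (k + m + 1 : ℕ) φ) (hc : HasCompactSupport φ) (hR : tsupport φ ⊆ ball 0 R)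
    (hR0 : 0 < R) (ht : 0 < t) (hu : Convex ℝ u) (hus : ∀ y ∈ u, ball y (R / t) ⊆ s) {y z : E}
    (hy : y ∈ u) (hz : z ∈ u) :
    dist (iteratedFDeriv ℝ (k + m) (dilate t φ ⋆[.lsmul ℝ ℝ, μ] f) y)
        (iteratedFDeriv ℝ (k + m) (dilate t φ ⋆[.lsmul ℝ ℝ, μ] f) z) ≤
      (∫ w, ‖iteratedFDeriv ℝ (m + 1) φ w‖ ∂μ) * R ^ σ * T * t ^ ((m + 1 : ℕ) - σ) *
        dist y z := by
  have hsmooth : ContDiff ℝ (k + m + 1 : ℕ) (dilate t φ ⋆[.lsmul ℝ ℝ, μ] f) :=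
    (hasCompactSupport_dilate hc ht.ne').contDiff_convolution_left (n := (k + m + 1 : ℕ))
      (.lsmul ℝ ℝ) (contDiff_dilate hφ t) hf.continuous.locallyIntegrable
  rw [dist_eq_norm, dist_eq_norm]
  refine hu.norm_image_sub_le_of_norm_fderiv_le (𝕜 := ℝ)
    (fun w _ ↦ hsmooth.differentiable_iteratedFDeriv (by exact_mod_cast Nat.lt_succ_self _) w)
    (fun w hw ↦ ?_) hz hy
  rw [norm_fderiv_iteratedFDeriv]
  exact h.norm_iteratedFDeriv_add_dilate_convolution_le hσ hf m.succ_ne_zero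
    (hφ.of_le (by norm_cast; omega)) hc hR hR0 ht (hus w hw)

theorem HolderBoundOn.exists_dist_iteratedFDeriv_add_dilate_convolution_le {A K : ℝ} {m : ℕ}
    (h : HolderBoundOn k A T f s) (hA : 0 ≤ A) (hσ : 0 ≤ σ) (hAσ : A ≤ m + σ)
    (hf : ContDiff ℝ k f) (hφ : ContDiff ℝ m φ) (hc : HasCompactSupport φ)
    (hR : tsupport φ ⊆ ball 0 R) (hR1 : 1 ≤ R) (ht : 0 < t)
    (hK : ∫ w, ‖iteratedFDeriv ℝ m φ w‖ ∂μ ≤ K) {y z : E} (hy : ball y (R / t) ⊆ s)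
    (hz : ball z (R / t) ⊆ s) :
    ∃ β ≤ σ, dist (iteratedFDeriv ℝ (k + m) (dilate t φ ⋆[.lsmul ℝ ℝ, μ] f) y)
        (iteratedFDeriv ℝ (k + m) (dilate t φ ⋆[.lsmul ℝ ℝ, μ] f) z) ≤
      2 * K * R ^ A * T * t ^ (m - A) * (t * dist y z) ^ β := by
  have hR0 : 0 < R := one_pos.trans_le hR1
  have hT : 0 ≤ T := h.nonneg ⟨y, hy (mem_ball_self (by positivity))⟩
  have hK0 : 0 ≤ K := (integral_nonneg fun _ ↦ norm_nonneg _).trans hK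
  rcases eq_or_ne m 0 with rfl | hm
  · refine ⟨A, by simpa using hAσ, ?_⟩
    have hφ0 : Continuous φ := hφ.continuous
    have hKR : K ≤ 2 * K * R ^ A := by
      nlinarith [Real.one_le_rpow hR1 hA]
    calc dist (iteratedFDeriv ℝ k (dilate t φ ⋆[.lsmul ℝ ℝ, μ] f) y)
          (iteratedFDeriv ℝ k (dilate t φ ⋆[.lsmul ℝ ℝ, μ] f) z)
        ≤ (∫ w, ‖dilate t φ w‖ ∂μ) * (T * dist y z ^ A) :=
          h.dist_iteratedFDeriv_convolution_le hf (contDiff_dilate hφ t).continuous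
            (hasCompactSupport_dilate hc ht.ne') (tsupport_dilate_subset_ball hR ht)
            (by positivity) hy hz
      _ ≤ 2 * K * R ^ A * (T * dist y z ^ A) := by
          gcongr
          rw [integral_norm_dilate hφ0 ht]
          exact le_trans (by simpa using hK) hKR
      _ = 2 * K * R ^ A * T * t ^ ((0 : ℕ) - A) * (t * dist y z) ^ A := by
          rw [Real.mul_rpow ht.le dist_nonneg, Nat.cast_zero, zero_sub, Real.rpow_neg ht.le]
          field_simp
  · refine ⟨0, hσ, ?_⟩
    have hderiv {w : E} (hw : ball w (R / t) ⊆ s) :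
        ‖iteratedFDeriv ℝ (k + m) (dilate t φ ⋆[.lsmul ℝ ℝ, μ] f) w‖ ≤
          K * R ^ A * T * t ^ (m - A) := by
      refine (h.norm_iteratedFDeriv_add_dilate_convolution_le hA hf hm hφ hc hR hR0 ht hw).trans ?_
      gcongr
    rw [Real.rpow_zero, mul_one]
    linarith [dist_le_norm_add_norm (iteratedFDeriv ℝ (k + m) (dilate t φ ⋆[.lsmul ℝ ℝ, μ] f) y)
      (iteratedFDeriv ℝ (k + m) (dilate t φ ⋆[.lsmul ℝ ℝ, μ] f) z), hderiv hy, hderiv hz]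

theorem HolderBoundOn.norm_iteratedFDeriv_dilate_convolution_le {A K β : ℝ} {m : ℕ}
    (h : HolderBoundOn k A T f s) (hA : 0 ≤ A) (hmβ : m ≤ β + A) (hβ : 0 ≤ β)
    (hf : ContDiff ℝ k f) (hφ : ContDiff ℝ m φ) (hc : HasCompactSupport φ)
    (hR : tsupport φ ⊆ ball 0 R) (hR1 : 1 ≤ R) (ht : 1 ≤ t)
    (hK : ∀ i ≤ m, ∫ y, ‖iteratedFDeriv ℝ i φ y‖ ∂μ ≤ K) {y : E} (hy : ball y (R / t) ⊆ s)
    {j : ℕ} (hj : j ≤ k + m) :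
    ‖iteratedFDeriv ℝ j (dilate t φ ⋆[.lsmul ℝ ℝ, μ] f) y‖ ≤ K * R ^ A * T * t ^ β := by
  have hR0 : 0 < R := one_pos.trans_le hR1
  have ht0 : 0 < t := one_pos.trans_le ht
  have hT : 0 ≤ T := h.nonneg ⟨y, hy (mem_ball_self (by positivity))⟩
  have hK0 : 0 ≤ K := (integral_nonneg fun _ ↦ norm_nonneg _).trans (hK 0 m.zero_le)
  rcases le_or_gt j k with hjk | hjk
  · have hφ0 : Continuous φ := hφ.continuous
    calc ‖iteratedFDeriv ℝ j (dilate t φ ⋆[.lsmul ℝ ℝ, μ] f) y‖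
        ≤ (∫ w, ‖dilate t φ w‖ ∂μ) * T :=
          h.norm_iteratedFDeriv_convolution_le hf (contDiff_dilate hφ t).continuous
            (hasCompactSupport_dilate hc ht0.ne') (tsupport_dilate_subset_ball hR ht0)
            (by positivity) hy hjk
      _ ≤ K * 1 * T * 1 := by
          rw [integral_norm_dilate hφ0 ht0, mul_one, mul_one]
          gcongr
          simpa using hK 0 m.zero_le
      _ ≤ K * R ^ A * T * t ^ β := by
          gcongr
          · exact Real.one_le_rpow hR1 hA
          · exact Real.one_le_rpow ht hβ
  · obtain ⟨i, rfl⟩ := Nat.exists_eq_add_of_lt hjk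
    have him : i + 1 ≤ m := by omega
    refine (h.norm_iteratedFDeriv_add_dilate_convolution_le (m := i + 1) hA hf i.succ_ne_zero
      (hφ.of_le (by exact_mod_cast him)) hc hR hR0 ht0 hy).trans ?_
    have hexp : ((i + 1 : ℕ) : ℝ) - A ≤ β := by
      have : ((i + 1 : ℕ) : ℝ) ≤ m := by exact_mod_cast him
      linarith
    gcongr
    exact hK _ him

theorem HolderBoundOn.dilate_convolution {A K : ℝ} {m : ℕ} {u : Set E}
    (h : HolderBoundOn k A T f s) (hA : 0 ≤ A) (hσ : 0 ≤ σ) (hσ1 : σ ≤ 1) (hAσ : A ≤ m + σ)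
    (hf : ContDiff ℝ k f) (hφ : ContDiff ℝ (k + m + 1 : ℕ) φ) (hc : HasCompactSupport φ)
    (hR : tsupport φ ⊆ ball 0 R) (hR1 : 1 ≤ R) (ht : 1 ≤ t) (hu : Convex ℝ u)
    (hus : ∀ y ∈ u, ball y (R / t) ⊆ s)
    (hK : ∀ i ≤ m + 1, ∫ y, ‖iteratedFDeriv ℝ i φ y‖ ∂μ ≤ K) :
    HolderBoundOn (k + m) σ (2 * K * R ^ A * T * t ^ (m + σ - A))
      (dilate t φ ⋆[.lsmul ℝ ℝ, μ] f) u := by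
  have hR0 : 0 < R := one_pos.trans_le hR1
  have ht0 : 0 < t := one_pos.trans_le ht
  have hK0 : 0 ≤ K := (integral_nonneg fun _ ↦ norm_nonneg _).trans (hK 0 (Nat.zero_le _))
  have hT {y : E} (hy : y ∈ u) : 0 ≤ T := h.nonneg ⟨y, hus y hy (mem_ball_self (by positivity))⟩
  have hφm : ContDiff ℝ m φ := hφ.of_le (by norm_cast; omega)
  refine ⟨fun j hj y hy ↦ ?_, fun y hy z hz ↦ ?_⟩
  · have hT0 := hT hy
    refine (h.norm_iteratedFDeriv_dilate_convolution_le (β := m + σ - A) hA (by linarith)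
      (by linarith) hf hφm hc hR hR1 ht (fun i hi ↦ hK i (by omega)) (hus y hy) hj).trans ?_
    gcongr
    linarith
  · have hT0 := hT hy
    obtain ⟨β, hβσ, hosc⟩ := h.exists_dist_iteratedFDeriv_add_dilate_convolution_le hA hσ hAσ hf
      hφm hc hR hR1 ht0 (hK m (by omega)) (hus y hy) (hus z hz)
    have hlip := h.dist_iteratedFDeriv_add_dilate_convolution_le_mul_dist (μ := μ) hA hf hφ hc hR
      hR0 ht0 hu hus hy hz
    have hint := hK (m + 1) le_rfl
    refine (le_mul_rpow_of_le_mul_rpow_of_le_mul (by positivity) (by positivity) hβσ hσ1 hosc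
      (hlip.trans ?_)).trans_eq ?_
    · rw [Nat.cast_succ, add_sub_right_comm, Real.rpow_add_one ht0.ne', ← mul_assoc, ← mul_assoc]
      gcongr
      linarith
    · rw [Real.mul_rpow ht0.le dist_nonneg, add_sub_right_comm, Real.rpow_add ht0]
      ring

end LocalEstimates

section ModerateWeight

variable {E : Type*} [NormedAddCommGroup E] {ρ : E → ℝ}

/-- A positive weight `ρ` is moderate if its values at points a bounded distance apart are
comparable. This is the only property of polynomial weights that local estimates need. -/
def IsModerateWeight (ρ : E → ℝ) : Prop :=
  (∀ x, 0 < ρ x) ∧ ∀ R, ∃ D, ∀ x z, dist z x ≤ R → ρ z ≤ D * ρ x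

theorem one_add_norm_rpow_le (r : ℝ) {R : ℝ} {x z : E} (hzx : dist z x ≤ R) :
    (1 + ‖z‖) ^ r ≤ (1 + R) ^ |r| * (1 + ‖x‖) ^ r := by
  have hR : 0 ≤ R := dist_nonneg.trans hzx
  have hx := norm_nonneg x
  have hz := norm_nonneg z
  rw [dist_eq_norm] at hzx
  rcases le_total 0 r with hr | hr
  · have hle : 1 + ‖z‖ ≤ (1 + R) * (1 + ‖x‖) := by
      nlinarith [norm_le_norm_add_norm_sub' z x]
    rw [abs_of_nonneg hr, ← Real.mul_rpow (by positivity) (by positivity)]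
    gcongr
  · have hle : 1 + ‖x‖ ≤ (1 + ‖z‖) * (1 + R) := by
      nlinarith [norm_le_norm_add_norm_sub z x]
    rw [abs_of_nonpos hr, Real.rpow_neg (by positivity), ← div_eq_inv_mul,
      le_div_iff₀ (by positivity), ← Real.mul_rpow (by positivity) (by positivity)]
    exact Real.rpow_le_rpow_of_nonpos (by positivity) hle hr

theorem IsPolyWeight.isModerateWeight (hρ : IsPolyWeight ρ) : IsModerateWeight ρ := by
  obtain ⟨hpos, r, c, C, hc, hcC, h⟩ := hρ
  have hC : 0 < C := hc.trans_le hcC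
  refine ⟨hpos, fun R ↦ ⟨C / c * (1 + R) ^ |r|, fun x z hzx ↦ ?_⟩⟩
  have hR : 0 ≤ R := dist_nonneg.trans hzx
  calc ρ z ≤ C * (1 + ‖z‖) ^ r := (h z).2
    _ ≤ C * ((1 + R) ^ |r| * (1 + ‖x‖) ^ r) := by gcongr; exact one_add_norm_rpow_le r hzx
    _ = C / c * (1 + R) ^ |r| * (c * (1 + ‖x‖) ^ r) := by field_simp
    _ ≤ C / c * (1 + R) ^ |r| * ρ x := by gcongr; exact (h x).1

end ModerateWeight

section WeightedNorm

variable {d : ℕ} {𝔹 : Type*} [NormedAddCommGroup 𝔹] [NormedSpace ℝ 𝔹]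
  {ρ : EuclideanSpace ℝ (Fin d) → ℝ} {k : ℕ} {σ : ℝ} {f : EuclideanSpace ℝ (Fin d) → 𝔹}

theorem ballCNorm_le_of_wNorm_ne_top (hρ : ∀ x, 0 < ρ x) (hf : wNorm ρ k σ f ≠ ⊤)
    (x : EuclideanSpace ℝ (Fin d)) :
    ballCNorm k σ f x ≤ ENNReal.ofReal (ρ x * (wNorm ρ k σ f).toReal) := by
  have h : (ENNReal.ofReal (ρ x))⁻¹ * ballCNorm k σ f x ≤ wNorm ρ k σ f :=
    le_iSup (fun x ↦ (ENNReal.ofReal (ρ x))⁻¹ * ballCNorm k σ f x) x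
  rw [ENNReal.ofReal_mul (hρ x).le, ENNReal.ofReal_toReal hf]
  rwa [ENNReal.inv_mul_le_iff (by simpa using hρ x) ENNReal.ofReal_ne_top] at h

theorem wNorm_le_ofReal {M : ℝ} (hρ : ∀ x, 0 < ρ x)
    (h : ∀ x, ballCNorm k σ f x ≤ ENNReal.ofReal (ρ x * M)) :
    wNorm ρ k σ f ≤ ENNReal.ofReal M := by
  refine iSup_le fun x ↦ ?_
  rw [ENNReal.inv_mul_le_iff (by simpa using hρ x) ENNReal.ofReal_ne_top,
    ← ENNReal.ofReal_mul (hρ x).le]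
  exact h x

theorem ofReal_norm_iteratedFDeriv_le_ballCNorm {j : ℕ} (hj : j ≤ k)
    (x : EuclideanSpace ℝ (Fin d)) :
    ENNReal.ofReal ‖iteratedFDeriv ℝ j f x‖ ≤ ballCNorm k σ f x := by
  rw [ofReal_norm]
  calc ‖iteratedFDeriv ℝ j f x‖ₑ ≤ ballSup (iteratedFDeriv ℝ j f) x :=
        le_iSup₂ (f := fun y (_ : y ∈ ball x 1) ↦ (‖iteratedFDeriv ℝ j f y‖₊ : ℝ≥0∞)) x
          (mem_ball_self one_pos)
    _ ≤ ∑ j ∈ Finset.range (k + 1), ballSup (iteratedFDeriv ℝ j f) x :=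
        Finset.single_le_sum (f := fun j ↦ ballSup (iteratedFDeriv ℝ j f) x)
          (fun _ _ ↦ zero_le) (Finset.mem_range.2 (Nat.lt_succ_of_le hj))
    _ ≤ ballCNorm k σ f x := le_self_add

theorem ofReal_dist_div_le_ballCNorm (hσ : 0 < σ) {x y : EuclideanSpace ℝ (Fin d)}
    (hyx : dist y x < 1) (hne : y ≠ x) :
    ENNReal.ofReal (dist (iteratedFDeriv ℝ k f y) (iteratedFDeriv ℝ k f x) / dist y x ^ σ) ≤
      ballCNorm k σ f x := by
  rw [dist_eq_norm, dist_eq_norm]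
  calc ENNReal.ofReal (‖iteratedFDeriv ℝ k f y - iteratedFDeriv ℝ k f x‖ / ‖y - x‖ ^ σ)
      ≤ ballHolderSemi σ (iteratedFDeriv ℝ k f) x :=
        le_iSup₂_of_le y (mem_ball.2 hyx)
          (le_iSup₂_of_le x (mem_ball_self one_pos) (le_iSup_of_le hne le_rfl))
    _ ≤ ballCNorm k σ f x := by
        rw [ballCNorm, if_pos hσ]
        exact le_add_self

theorem norm_iteratedFDeriv_le_of_wNorm_ne_top (hρ : ∀ x, 0 < ρ x) (hf : wNorm ρ k σ f ≠ ⊤)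
    {j : ℕ} (hj : j ≤ k) (x : EuclideanSpace ℝ (Fin d)) :
    ‖iteratedFDeriv ℝ j f x‖ ≤ ρ x * (wNorm ρ k σ f).toReal :=
  (ENNReal.ofReal_le_ofReal_iff (mul_nonneg (hρ x).le ENNReal.toReal_nonneg)).1
    ((ofReal_norm_iteratedFDeriv_le_ballCNorm hj x).trans (ballCNorm_le_of_wNorm_ne_top hρ hf x))

theorem dist_iteratedFDeriv_le_of_wNorm_ne_top (hρ : ∀ x, 0 < ρ x) (hf : wNorm ρ k σ f ≠ ⊤)
    (hσ : 0 < σ) {x y : EuclideanSpace ℝ (Fin d)} (hyx : dist y x < 1) :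
    dist (iteratedFDeriv ℝ k f y) (iteratedFDeriv ℝ k f x) ≤
      ρ x * (wNorm ρ k σ f).toReal * dist y x ^ σ := by
  have hM : 0 ≤ ρ x * (wNorm ρ k σ f).toReal := mul_nonneg (hρ x).le ENNReal.toReal_nonneg
  rcases eq_or_ne y x with rfl | hne
  · rw [dist_self]
    positivity
  · have hdist : 0 < dist y x := dist_pos.2 hne
    rw [← div_le_iff₀ (by positivity)]
    exact (ENNReal.ofReal_le_ofReal_iff hM).1
      ((ofReal_dist_div_le_ballCNorm hσ hyx hne).trans (ballCNorm_le_of_wNorm_ne_top hρ hf x))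

theorem holderBoundOn_of_wNorm_ne_top (hρ : ∀ x, 0 < ρ x) (hf : wNorm ρ k σ f ≠ ⊤) (hσ : 0 ≤ σ)
    {D : ℝ} {x : EuclideanSpace ℝ (Fin d)} {s : Set (EuclideanSpace ℝ (Fin d))}
    (hD : ∀ z ∈ s, ρ z ≤ D * ρ x) :
    HolderBoundOn k σ (2 * (D * ρ x * (wNorm ρ k σ f).toReal)) f s := by
  set M := (wNorm ρ k σ f).toReal
  have hM : 0 ≤ M := ENNReal.toReal_nonneg
  have hDM {z} (hz : z ∈ s) : 0 ≤ D * ρ x * M :=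
    mul_nonneg ((hρ z).le.trans (hD z hz)) hM
  have hnorm {j} (hj : j ≤ k) {z} (hz : z ∈ s) : ‖iteratedFDeriv ℝ j f z‖ ≤ D * ρ x * M :=
    (norm_iteratedFDeriv_le_of_wNorm_ne_top hρ hf hj z).trans (by gcongr; exact hD z hz)
  refine ⟨fun j hj y hy ↦ by linarith [hnorm hj hy, hDM hy], fun y hy z hz ↦ ?_⟩
  have hz0 := hDM hz
  have hbounded : dist (iteratedFDeriv ℝ k f y) (iteratedFDeriv ℝ k f z) ≤ 2 * (D * ρ x * M) := by
    linarith [dist_le_norm_add_norm (iteratedFDeriv ℝ k f y) (iteratedFDeriv ℝ k f z),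
      hnorm le_rfl hy, hnorm le_rfl hz]
  rcases hσ.eq_or_lt with rfl | hσ
  · simpa only [Real.rpow_zero, mul_one] using hbounded
  rcases lt_or_ge (dist y z) 1 with hlt | hge
  · refine (dist_iteratedFDeriv_le_of_wNorm_ne_top hρ hf hσ hlt).trans ?_
    refine mul_le_mul_of_nonneg_right ?_ (by positivity)
    linarith [mul_le_mul_of_nonneg_right (hD z hz) hM]
  · exact hbounded.trans (le_mul_of_one_le_right (by positivity) (Real.one_le_rpow hge hσ.le))

theorem HolderBoundOn.ballCNorm_le {T : ℝ} {x : EuclideanSpace ℝ (Fin d)}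
    (h : HolderBoundOn k σ T f (ball x 1)) : ballCNorm k σ f x ≤ ENNReal.ofReal ((k + 2) * T) := by
  have hT : 0 ≤ T := h.nonneg ⟨x, mem_ball_self one_pos⟩
  have hsup : ∑ j ∈ Finset.range (k + 1), ballSup (iteratedFDeriv ℝ j f) x ≤
      ENNReal.ofReal ((k + 1) * T) := by
    calc ∑ j ∈ Finset.range (k + 1), ballSup (iteratedFDeriv ℝ j f) x
        ≤ ∑ _j ∈ Finset.range (k + 1), ENNReal.ofReal T := by
          refine Finset.sum_le_sum fun j hj ↦ iSup₂_le fun y hy ↦ ?_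
          rw [← enorm_eq_nnnorm, ← ofReal_norm]
          gcongr
          exact h.norm_le j (Finset.mem_range_succ_iff.1 hj) y hy
      _ = ENNReal.ofReal ((k + 1) * T) := by
          rw [Finset.sum_const, Finset.card_range, ← ENNReal.ofReal_nsmul, nsmul_eq_mul,
            Nat.cast_succ]
  have hsemi : (if 0 < σ then ballHolderSemi σ (iteratedFDeriv ℝ k f) x else 0) ≤
      ENNReal.ofReal T := by
    split_ifs
    · refine iSup₂_le fun y hy ↦ iSup₂_le fun z hz ↦ iSup_le fun hne ↦ ?_
      have hpos : 0 < ‖y - z‖ := norm_pos_iff.2 (sub_ne_zero.2 hne)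
      gcongr
      rw [div_le_iff₀ (by positivity)]
      simpa only [dist_eq_norm] using h.dist_le y hy z hz
    · exact zero_le
  calc ballCNorm k σ f x ≤ ENNReal.ofReal ((k + 1) * T) + ENNReal.ofReal T := add_le_add hsup hsemi
    _ = ENNReal.ofReal ((k + 2) * T) := by
        rw [← ENNReal.ofReal_add (by positivity) hT]
        ring_nf

end WeightedNorm

theorem wNorm_dilate_convolution_le {d : ℕ} {𝔹 : Type*} [NormedAddCommGroup 𝔹]
    [NormedSpace ℝ 𝔹] {ρ : EuclideanSpace ℝ (Fin d) → ℝ} (hρ : ∀ x, 0 < ρ x) {k m : ℕ}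
    {A σ D K R t : ℝ} (hA : 0 ≤ A) (hσ : 0 ≤ σ) (hσ1 : σ ≤ 1) (hAσ : A ≤ m + σ)
    {φ : EuclideanSpace ℝ (Fin d) → ℝ} (hφ : ContDiff ℝ (k + m + 1 : ℕ) φ)
    (hc : HasCompactSupport φ) (hR : tsupport φ ⊆ ball 0 R) (hR1 : 1 ≤ R)
    (hD : ∀ x z, dist z x ≤ 2 * R → ρ z ≤ D * ρ x)
    (hK : ∀ i ≤ m + 1, ∫ y, ‖iteratedFDeriv ℝ i φ y‖ ≤ K) (ht : 1 ≤ t)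
    {f : EuclideanSpace ℝ (Fin d) → 𝔹} (hf : ContDiff ℝ k f) (hfρ : wNorm ρ k A f ≠ ⊤) :
    wNorm ρ (k + m) σ (dilate t φ ⋆[.lsmul ℝ ℝ] f) ≤
      ENNReal.ofReal ((k + m + 2) * (4 * K * R ^ A * D) * t ^ (m + σ - A)) * wNorm ρ k A f := by
  have hK0 : 0 ≤ K := (integral_nonneg fun _ ↦ norm_nonneg _).trans (hK 0 (Nat.zero_le _))
  have hD0 : 0 ≤ D := nonneg_of_mul_nonneg_left
    ((hρ 0).le.trans (hD 0 0 (by rw [dist_self]; positivity))) (hρ 0)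
  rw [← ENNReal.ofReal_toReal hfρ, ← ENNReal.ofReal_mul (by positivity)]
  refine wNorm_le_ofReal hρ fun x ↦ ?_
  have hball : ∀ y ∈ ball x 1, ball y (R / t) ⊆ ball x (2 * R) := fun y hy ↦ by
    refine ball_subset_ball' ?_
    linarith [mem_ball.1 hy, div_le_self (zero_le_one.trans hR1) ht]
  have hfx : HolderBoundOn k A (2 * (D * ρ x * (wNorm ρ k A f).toReal)) f (ball x (2 * R)) :=
    holderBoundOn_of_wNorm_ne_top hρ hfρ hA fun z hz ↦ hD x z (mem_ball.1 hz).le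
  convert (hfx.dilate_convolution (μ := volume) hA hσ hσ1 hAσ hf hφ hc hR hR1 ht
    (convex_ball x 1) hball hK).ballCNorm_le using 2
  push_cast
  ring

theorem exists_wNorm_dilate_convolution_le {d : ℕ} {ρ : EuclideanSpace ℝ (Fin d) → ℝ}
    (hρ : IsModerateWeight ρ) {k m : ℕ} {A σ : ℝ} (hA : 0 ≤ A) (hσ : 0 ≤ σ) (hσ1 : σ ≤ 1)
    (hAσ : A ≤ m + σ) {φ : EuclideanSpace ℝ (Fin d) → ℝ} (hφ : ContDiff ℝ (k + m + 1 : ℕ) φ)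
    (hc : HasCompactSupport φ) :
    ∃ C : ℝ, 0 < C ∧
      ∀ {𝔹 : Type u} [NormedAddCommGroup 𝔹] [NormedSpace ℝ 𝔹]
        {f : EuclideanSpace ℝ (Fin d) → 𝔹}, ContDiff ℝ k f → ∀ {t : ℝ}, 1 ≤ t →
          wNorm ρ (k + m) σ (dilate t φ ⋆[.lsmul ℝ ℝ] f) ≤
            ENNReal.ofReal (C * t ^ (m + σ - A)) * wNorm ρ k A f := by
  obtain ⟨R, hR1, hR⟩ := hc.isCompact.isBounded.subset_ball_lt 1 0
  obtain ⟨hρpos, hmoderate⟩ := hρ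
  obtain ⟨D, hD⟩ := hmoderate (2 * R)
  have hD0 : 0 < D := pos_of_mul_pos_left
    ((hρpos 0).trans_le (hD 0 0 (by rw [dist_self]; positivity))) (hρpos 0).le
  have hnonneg (i : ℕ) : 0 ≤ ∫ y, ‖iteratedFDeriv ℝ i φ y‖ := integral_nonneg fun _ ↦ norm_nonneg _
  obtain ⟨K, hK0, hK⟩ : ∃ K > 0, ∀ i ≤ m + 1, ∫ y, ‖iteratedFDeriv ℝ i φ y‖ ≤ K := by
    refine ⟨1 + ∑ i ∈ Finset.range (m + 2), ∫ y, ‖iteratedFDeriv ℝ i φ y‖, ?_, fun i hi ↦ ?_⟩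
    · linarith [Finset.sum_nonneg fun i (_ : i ∈ Finset.range (m + 2)) ↦ hnonneg i]
    · linarith [Finset.single_le_sum (fun i _ ↦ hnonneg i) (Finset.mem_range_succ_iff.2 hi)]
  refine ⟨(k + m + 2) * (4 * K * R ^ A * D), by positivity, fun {𝔹} _ _ f hf t ht ↦ ?_⟩
  by_cases hfρ : wNorm ρ k A f = ⊤
  · rw [hfρ, ENNReal.mul_top (by simp only [ne_eq, ENNReal.ofReal_eq_zero, not_le]; positivity)]
    exact le_top
  · exact wNorm_dilate_convolution_le hρpos hA hσ hσ1 hAσ hφ hc hR hR1.le hD hK ht hf hfρ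

theorem mollify_eq_convolution {d : ℕ} {𝔹 : Type*} [NormedAddCommGroup 𝔹] [NormedSpace ℝ 𝔹]
    [CompleteSpace 𝔹] (φ : EuclideanSpace ℝ (Fin d) → ℝ) (n : ℕ)
    (f : EuclideanSpace ℝ (Fin d) → 𝔹) :
    mollify φ n f = dilate n φ ⋆[.lsmul ℝ ℝ] f := by
  funext x
  simp only [mollify, dilate, convolution_lsmul, finrank_euclideanSpace_fin]

theorem mollify_smoothing_general {d : ℕ} {ρ : EuclideanSpace ℝ (Fin d) → ℝ}
    (hρ : IsModerateWeight ρ) {α γ : ℝ} (hα : 0 ≤ α) (hαγ : α ≤ γ)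
    {φ : EuclideanSpace ℝ (Fin d) → ℝ} (hφ : ContDiff ℝ (⌊γ⌋₊ + 1 : ℕ) φ)
    (hc : HasCompactSupport φ) :
    ∃ C : ℝ, 0 < C ∧
      ∀ {𝔹 : Type u} [NormedAddCommGroup 𝔹] [NormedSpace ℝ 𝔹] [CompleteSpace 𝔹]
        (f : EuclideanSpace ℝ (Fin d) → 𝔹), ContDiff ℝ ⌊α⌋₊ f →
        ∀ n : ℕ, 1 ≤ n →
          wNormE ρ γ (mollify φ n f) ≤ ENNReal.ofReal (C * n ^ (γ - α)) * wNormE ρ α f := by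
  obtain ⟨m, hm⟩ := Nat.exists_eq_add_of_le (Nat.floor_mono hαγ)
  have hmγ : (⌊γ⌋₊ : ℝ) = ⌊α⌋₊ + m := by exact_mod_cast hm
  have hexp : m + (γ - ⌊γ⌋₊) - (α - ⌊α⌋₊) = γ - α := by linarith
  obtain ⟨C, hC, hbound⟩ := exists_wNorm_dilate_convolution_le hρ (m := m) (A := α - ⌊α⌋₊)
    (σ := γ - ⌊γ⌋₊) (sub_nonneg.2 (Nat.floor_le hα)) (sub_nonneg.2 (Nat.floor_le (hα.trans hαγ)))
    (by linarith [Nat.lt_floor_add_one γ]) (by linarith) (hm ▸ hφ) hc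
  refine ⟨C, hC, fun f hf n hn ↦ ?_⟩
  rw [mollify_eq_convolution, wNormE, wNormE, ← hexp, hm]
  simpa only [hm] using hbound hf (Nat.one_le_cast.2 hn)

/-- Smoothing estimate for mollifications:
`‖f_n‖_{C^γ_ρ} ≤ C n^{γ−α} ‖f‖_{C^α_ρ}` for `0 ≤ α ≤ γ ≤ 2`. -/
theorem mollify_smoothing {d : ℕ} {𝔹 : Type*} [NormedAddCommGroup 𝔹] [NormedSpace ℝ 𝔹]
    [CompleteSpace 𝔹]
    (ρ : EuclideanSpace ℝ (Fin d) → ℝ) (hρ : IsPolyWeight ρ)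
    (α γ : ℝ) (hα : 0 ≤ α) (hαγ : α ≤ γ) (hγ : γ ≤ 2)
    (φ : EuclideanSpace ℝ (Fin d) → ℝ)
    (hφsmooth : ContDiff ℝ (⊤ : ℕ∞) φ) (hφsupp : HasCompactSupport φ)
    (hφpos : ∀ x, 0 ≤ φ x) (hφint : ∫ x : EuclideanSpace ℝ (Fin d), φ x = 1)
    (hφsymm : ∀ x, φ (-x) = φ x) :
    ∃ C : ℝ, 0 < C ∧
      ∀ f : EuclideanSpace ℝ (Fin d) → 𝔹,
        ContDiff ℝ (⌊α⌋₊ : ℕ∞) f → wNormE ρ α f ≠ ⊤ →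
        ∀ n : ℕ, 1 ≤ n →
          wNormE ρ γ (mollify φ n f)
            ≤ ENNReal.ofReal (C * (n : ℝ) ^ (γ - α)) * wNormE ρ α f := by
  obtain ⟨C, hC, hbound⟩ := mollify_smoothing_general hρ.isModerateWeight hα hαγ
    (hφsmooth.of_le (by exact_mod_cast le_top)) hφsupp
  exact ⟨C, hC, fun f hf _ n hn ↦ hbound f hf n hn⟩
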